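/- Let R be a ring and let F₁ →^{f₁} F₂ →^{f₂} F₃ → ⋯ be a countable direct system of finitely generated free R-modules with direct limit B = lim F_n. Then B is a projective R-module if and only if the tower (Hom_R(F_n, R), Hom_R(f_n, R))_{n∈ℕ} satisfies the Mittag-Leffler condition. -/

import Mathlib

/-!
Let `P = ⨁ Fₙ`.  Since `φ` is injective with cokernel `B` and `P` is projective, `B` is projective
iff `φ` has a retraction `ψ`.  Writing `gₙ = ψ ∘ εₙ`, a retraction is the same as a family
`gₙ : Fₙ → P` with `gₙ - g_{n+1} ∘ fₙ = εₙ`.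

If such a family exists, then `g_m` has image in finitely many summands, because `F_m` is finitely
generated.  Expanding `g_m = ε_m + ε_{m+1} f_m + ⋯` and projecting to a far summand `F_{m+j}` shows
that `f_{m,j} : F_m → F_{m+j}` factors through `f_{m,j+1}`, so every functional on `F_m` factoring
through `f_{m,j}` factors through `f_{m,j+1}` (`mittagLeffler_of_family`).

Conversely, the Mittag-Leffler condition for `Hom(Fₙ, R)`, applied to the coordinate functionals of
`F_{m+d}`, makes `f_{m,d}` factor through every later `f_{m,j}`; hence `Hom(Fₙ, M)` is
Mittag-Leffler for every `M` (`mittagLeffler_homMap`).  For `M = P` the vanishing of `lim¹`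
(`exists_solution`) yields the family `gₙ`.  That vanishing is proved on the affine tower
`x ↦ λₙ x + aₙ`: its images are cosets of the images of the linear tower, so they stabilise too, and
a compatible sequence can be chosen step by step inside the stable images.
-/

universe u

open DirectSum

variable {R : Type u} [Ring R]

/-- Composite `λ_m ∘ ⋯ ∘ λ_{m+k-1} : H_{m+k} → H_m` in a tower of abelian groups. -/
def towerComp {H : ℕ → Type v} [∀ n, AddCommGroup (H n)]
    (lam : ∀ n, H (n + 1) →+ H n) (m : ℕ) : (k : ℕ) → H (m + k) →+ H m
  | 0 => AddMonoidHom.id (H m)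
  | k + 1 => (towerComp lam m k).comp (lam (m + k))

/-- The Mittag-Leffler condition: all the descending chains of images are stationary. -/
def MittagLeffler {H : ℕ → Type v} [∀ n, AddCommGroup (H n)]
    (lam : ∀ n, H (n + 1) →+ H n) : Prop :=
  ∀ m, ∃ d, ∀ j, d ≤ j →
    Set.range ⇑(towerComp lam m j) = Set.range ⇑(towerComp lam m d)

/-- `Hom_R(fₙ, M) : Hom_R(F_{n+1}, M) → Hom_R(Fₙ, M)`, `g ↦ g ∘ fₙ`. -/
def homMap {C : ℕ → Type u} [∀ n, AddCommGroup (C n)] [∀ n, Module R (C n)]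
    (f : ∀ n, C n →ₗ[R] C (n + 1)) (M : Type v) [AddCommGroup M] [Module R M]
    (n : ℕ) : (C (n + 1) →ₗ[R] M) →+ (C n →ₗ[R] M) where
  toFun g := g.comp (f n)
  map_zero' := by ext x; simp
  map_add' g h := by ext x; simp

/-- The map `φ : ⊕ₙ Fₙ → ⊕ₙ Fₙ` determined by `φ ∘ εₙ = εₙ - ε_{n+1} ∘ fₙ`, for the
direct system of finitely generated free modules `Fₙ = R^{k n}`. -/
noncomputable def phiMap (R : Type u) [Ring R] (k : ℕ → ℕ)
    (f : ∀ n, (Fin (k n) → R) →ₗ[R] (Fin (k (n + 1)) → R)) :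
    (⨁ n, (Fin (k n) → R)) →ₗ[R] ⨁ n, (Fin (k n) → R) :=
  DirectSum.toModule R ℕ (⨁ n, (Fin (k n) → R))
    (fun n => DirectSum.lof R ℕ (fun n => Fin (k n) → R) n
      - (DirectSum.lof R ℕ (fun n => Fin (k n) → R) (n + 1)).comp (f n))

/-! ### Vanishing of `lim¹` for Mittag-Leffler towers -/

section Tower

variable {H : ℕ → Type v} [∀ n, AddCommGroup (H n)]

/-- For `m ≤ N`, `AffImage lam a m N` is the image in `H m` of `H N` under the affine tower
`x ↦ lam i x + a i`.
It is described by whole sequences that are compatible on `[m, N)`, which avoids transport along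
equalities of indices. -/
def AffImage (lam : ∀ n, H (n + 1) →+ H n) (a : ∀ n, H n) (m N : ℕ) : Set (H m) :=
  {x | ∃ z : ∀ n, H n, z m = x ∧ ∀ i, m ≤ i → i < N → z i = lam i (z (i + 1)) + a i}

lemma exists_aff_chain (lam : ∀ n, H (n + 1) →+ H n) (a : ∀ n, H n) (N : ℕ) :
    ∀ y : H N, ∃ w : ∀ n, H n, w N = y ∧ ∀ i, i < N → w i = lam i (w (i + 1)) + a i := by
  induction N with
  | zero => exact fun y => ⟨Function.update 0 0 y, by simp, by simp⟩
  | succ N ih =>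
    intro y
    obtain ⟨w, hw, h⟩ := ih (lam N y + a N)
    refine ⟨Function.update w (N + 1) y, by simp, fun i hi => ?_⟩
    rw [Function.update_of_ne (by omega)]
    rcases Nat.lt_succ_iff_lt_or_eq.mp hi with hi | rfl
    · rw [Function.update_of_ne (by omega)]
      exact h i hi
    · rw [Function.update_self, hw]

lemma towerComp_chain (lam : ∀ n, H (n + 1) →+ H n) (m : ℕ) (z : ∀ n, H n) (j : ℕ)
    (hz : ∀ i, m ≤ i → i < m + j → z i = lam i (z (i + 1))) :
    towerComp lam m j (z (m + j)) = z m := by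
  induction j with
  | zero => rfl
  | succ j ih =>
    rw [← ih fun i hi hj => hz i hi (by omega), hz (m + j) (by omega) (by omega)]
    rfl

lemma range_towerComp (lam : ∀ n, H (n + 1) →+ H n) (m j : ℕ) :
    Set.range ⇑(towerComp lam m j) = AffImage lam 0 m (m + j) := by
  ext x
  constructor
  · rintro ⟨y, rfl⟩
    obtain ⟨w, rfl, h⟩ := exists_aff_chain lam 0 (m + j) y
    refine ⟨w, ?_, fun i _ hi => h i hi⟩
    exact (towerComp_chain lam m w j fun i _ hi => by simpa using h i hi).symm
  · rintro ⟨z, rfl, h⟩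
    exact ⟨_, towerComp_chain lam m z j fun i h1 h2 => by simpa using h i h1 h2⟩

/-- Images of the affine tower are cosets of images of the linear one, so they stabilise as well. -/
lemma affImage_subset (lam : ∀ n, H (n + 1) →+ H n) (a : ∀ n, H n) {m K N : ℕ} (hKN : K ≤ N)
    (h : AffImage lam 0 m K ⊆ AffImage lam 0 m N) : AffImage lam a m K ⊆ AffImage lam a m N := by
  rintro _ ⟨z, rfl, hz⟩
  obtain ⟨w, -, hw⟩ := exists_aff_chain lam a N 0
  obtain ⟨v, hv0, hv⟩ : z m - w m ∈ AffImage lam 0 m N := by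
    refine h ⟨z - w, rfl, fun i h1 h2 => ?_⟩
    simp only [Pi.sub_apply, Pi.zero_apply, map_sub, hz i h1 h2, hw i (by omega)]
    abel
  refine ⟨v + w, by simp [hv0], fun i h1 h2 => ?_⟩
  simp only [Pi.add_apply, map_add]
  conv_lhs => rw [hv i h1 h2, hw i h2]
  simp only [Pi.zero_apply]
  abel

/-- The map whose cokernel is `lim¹` of the tower is surjective for a Mittag-Leffler tower. -/
lemma exists_solution (lam : ∀ n, H (n + 1) →+ H n) (hML : MittagLeffler lam) (a : ∀ n, H n) :
    ∃ g : ∀ n, H n, ∀ n, g n = lam n (g (n + 1)) + a n := by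
  choose d hd using hML
  have hstable : ∀ m x, x ∈ AffImage lam a m (m + d m) → ∀ N, x ∈ AffImage lam a m N := by
    intro m x hx N
    rcases le_total (m + d m) N with hN | hN
    · obtain ⟨j, rfl⟩ := Nat.exists_eq_add_of_le (le_trans (Nat.le_add_right m (d m)) hN)
      refine affImage_subset lam a hN ?_ hx
      rw [← range_towerComp, ← range_towerComp, hd m j (by omega)]
    · obtain ⟨z, h0, h⟩ := hx
      exact ⟨z, h0, fun i h1 h2 => h i h1 (by omega)⟩
  have hlift : ∀ m (x : {x : H m // ∀ N, x ∈ AffImage lam a m N}),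
      ∃ y : {y : H (m + 1) // ∀ N, y ∈ AffImage lam a (m + 1) N}, x.1 = lam m y.1 + a m := by
    rintro m ⟨x, hx⟩
    obtain ⟨z, rfl, hz⟩ := hx (m + 1 + d (m + 1))
    exact ⟨⟨z (m + 1), hstable _ _ ⟨z, rfl, fun i h1 h2 => hz i (by omega) h2⟩⟩,
      hz m le_rfl (by omega)⟩
  choose next hnext using hlift
  obtain ⟨w, -, hw⟩ := exists_aff_chain lam a (0 + d 0) 0
  let g : ∀ n, {x : H n // ∀ N, x ∈ AffImage lam a n N} := fun n =>
    Nat.rec ⟨w 0, hstable 0 _ ⟨w, rfl, fun i _ h => hw i h⟩⟩ (fun n x => next n x) n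
  exact ⟨fun n => (g n).1, fun n => hnext n (g n)⟩

end Tower

/-! ### Factorisation of transition maps -/

section System

/-- The transition map `f_{m,j} : F_m → F_{m+j}`. -/
def transMap {C : ℕ → Type u} [∀ n, AddCommGroup (C n)] [∀ n, Module R (C n)]
    (f : ∀ n, C n →ₗ[R] C (n + 1)) (m : ℕ) : (j : ℕ) → C m →ₗ[R] C (m + j)
  | 0 => LinearMap.id
  | j + 1 => (f (m + j)).comp (transMap f m j)

lemma towerComp_homMap {C : ℕ → Type u} [∀ n, AddCommGroup (C n)] [∀ n, Module R (C n)]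
    (f : ∀ n, C n →ₗ[R] C (n + 1)) (M : Type v) [AddCommGroup M] [Module R M] (m j : ℕ)
    (g : C (m + j) →ₗ[R] M) :
    towerComp (H := fun n => C n →ₗ[R] M) (homMap f M) m j g = g.comp (transMap f m j) := by
  induction j with
  | zero => rfl
  | succ j ih => exact ih (g.comp (f (m + j)))

variable {k : ℕ → ℕ} (f : ∀ n, (Fin (k n) → R) →ₗ[R] (Fin (k (n + 1)) → R))

/-- The condition passes from the dual tower to `Hom(Fₙ, M)`: being tested on the coordinate
functionals, it says that `f_{m,d}` itself factors through `f_{m,j}`. -/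
lemma mittagLeffler_homMap (M : Type v) [AddCommGroup M] [Module R M]
    (h : MittagLeffler (H := fun n => (Fin (k n) → R) →ₗ[R] R) (homMap f R)) :
    MittagLeffler (H := fun n => (Fin (k n) → R) →ₗ[R] M) (homMap f M) := by
  intro m
  obtain ⟨d, hd⟩ := h m
  refine ⟨d, fun j hj => Set.Subset.antisymm ?_ ?_⟩
  · rw [range_towerComp, range_towerComp]
    rintro _ ⟨z, h0, hz⟩
    exact ⟨z, h0, fun i h1 h2 => hz i h1 (by omega)⟩
  · rintro _ ⟨g, rfl⟩
    have hc : ∀ i : Fin (k (m + d)), ∃ w : (Fin (k (m + j)) → R) →ₗ[R] R,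
        w.comp (transMap f m j) = (LinearMap.proj i).comp (transMap f m d) := by
      intro i
      obtain ⟨w, hw⟩ := (hd j hj).symm.subset ⟨(LinearMap.proj i), rfl⟩
      rw [towerComp_homMap, towerComp_homMap] at hw
      exact ⟨w, hw⟩
    choose w hw using hc
    refine ⟨g.comp (LinearMap.pi w), ?_⟩
    rw [towerComp_homMap, towerComp_homMap, LinearMap.comp_assoc]
    congr 1
    refine LinearMap.ext fun x => ?_
    funext i
    exact LinearMap.congr_fun (hw i) x

/-- A family `gₙ` with `gₙ - g_{n+1} fₙ = εₙ` forces the dual tower to be Mittag-Leffler. -/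
lemma mittagLeffler_of_family (g : ∀ n, (Fin (k n) → R) →ₗ[R] ⨁ n, (Fin (k n) → R))
    (hg : ∀ n, g n = (g (n + 1)).comp (f n) + DirectSum.lof R ℕ (fun n => Fin (k n) → R) n) :
    MittagLeffler (H := fun n => (Fin (k n) → R) →ₗ[R] R) (homMap f R) := by
  intro m
  -- `F_m` is finitely generated, so `g m` misses all far summands.
  obtain ⟨d, hd⟩ : ∃ d, ∀ n, d ≤ n →
      (DirectSum.component R ℕ (fun n => Fin (k n) → R) n).comp (g m) = 0 := by
    classical
    refine ⟨(Finset.univ.sup fun i : Fin (k m) =>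
      (DFinsupp.support (g m (Pi.single i 1))).sup id) + 1, fun n hn => ?_⟩
    refine LinearMap.pi_ext' fun i => LinearMap.ext_ring ?_
    by_contra hne
    have h1 : n ∈ DFinsupp.support (g m (Pi.single i 1)) := DFinsupp.mem_support_iff.mpr hne
    have h2 := Finset.le_sup (f := id) h1
    have h3 := Finset.le_sup (f := fun i : Fin (k m) =>
      (DFinsupp.support (g m (Pi.single i 1))).sup id) (Finset.mem_univ i)
    simp only [id] at h2 h3
    omega
  have hexp : ∀ j i, i ≤ j →
      (DirectSum.component R ℕ (fun n => Fin (k n) → R) (m + j)).comp (g m) =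
      ((DirectSum.component R ℕ (fun n => Fin (k n) → R) (m + j)).comp (g (m + i))).comp
        (transMap f m i) := by
    intro j i
    induction i with
    | zero => intro _; rfl
    | succ i ih =>
      intro hi
      rw [ih (by omega), hg (m + i)]
      refine LinearMap.ext fun x => ?_
      have : DirectSum.component R ℕ (fun n => Fin (k n) → R) (m + j)
          (DirectSum.lof R ℕ (fun n => Fin (k n) → R) (m + i) (transMap f m i x)) = 0 :=
        DirectSum.of_eq_of_ne _ _ _ (by omega)
      simp only [LinearMap.comp_apply, LinearMap.add_apply, map_add, this, add_zero]
      rfl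
  have hfac : ∀ j, d ≤ j → ∃ h : (Fin (k (m + (j + 1))) → R) →ₗ[R] (Fin (k (m + j)) → R),
      transMap f m j = h.comp (transMap f m (j + 1)) := by
    intro j hj
    have h0 := hexp j j le_rfl
    rw [hd (m + j) (by omega), hg (m + j)] at h0
    refine ⟨-((DirectSum.component R ℕ (fun n => Fin (k n) → R) (m + j)).comp
      (g (m + j + 1))), ?_⟩
    refine LinearMap.ext fun x => ?_
    have h1 := LinearMap.congr_fun h0 x
    simp only [LinearMap.comp_apply, LinearMap.add_apply, map_add, LinearMap.zero_apply,
      DirectSum.component.lof_self] at h1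
    exact eq_neg_of_add_eq_zero_right h1.symm
  refine ⟨d, fun j hj => ?_⟩
  induction j, hj using Nat.le_induction with
  | base => rfl
  | succ j hj ih =>
    rw [← ih]
    obtain ⟨h, hh⟩ := hfac j hj
    refine Set.Subset.antisymm ?_ ?_
    · rintro _ ⟨u, rfl⟩
      exact ⟨u.comp (f (m + j)), rfl⟩
    · rintro _ ⟨u, rfl⟩
      refine ⟨u.comp h, ?_⟩
      rw [towerComp_homMap, towerComp_homMap, LinearMap.comp_assoc, ← hh]

/-! ### Splitting of the presentation -/

lemma phiMap_lof (n : ℕ) : (phiMap R k f).comp (DirectSum.lof R ℕ (fun n => Fin (k n) → R) n) =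
    DirectSum.lof R ℕ (fun n => Fin (k n) → R) n
      - (DirectSum.lof R ℕ (fun n => Fin (k n) → R) (n + 1)).comp (f n) := by
  refine LinearMap.ext fun x => ?_
  simp [phiMap, DirectSum.toModule_lof]

lemma phiMap_injective : Function.Injective (phiMap R k f) := by
  have h0 : (DirectSum.component R ℕ (fun n => Fin (k n) → R) 0).comp (phiMap R k f) =
      DirectSum.component R ℕ (fun n => Fin (k n) → R) 0 := by
    refine DirectSum.linearMap_ext R fun n => ?_
    rw [LinearMap.comp_assoc, phiMap_lof]
    refine LinearMap.ext fun x => ?_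
    have : DirectSum.component R ℕ (fun n => Fin (k n) → R) 0
        (DirectSum.lof R ℕ (fun n => Fin (k n) → R) (n + 1) (f n x)) = 0 :=
      DirectSum.of_eq_of_ne (n + 1) 0 (f n x) (by omega)
    simp [this]
  have hs : ∀ i, (DirectSum.component R ℕ (fun n => Fin (k n) → R) (i + 1)).comp (phiMap R k f) =
      DirectSum.component R ℕ (fun n => Fin (k n) → R) (i + 1) -
        (f i).comp (DirectSum.component R ℕ (fun n => Fin (k n) → R) i) := by
    intro i
    refine DirectSum.linearMap_ext R fun n => ?_
    rw [LinearMap.comp_assoc, phiMap_lof]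
    refine LinearMap.ext fun x => ?_
    by_cases hn : n = i
    · subst hn
      simp [DirectSum.component.lof_self]
    · have h1 : DirectSum.component R ℕ (fun n => Fin (k n) → R) (i + 1)
          (DirectSum.lof R ℕ (fun n => Fin (k n) → R) (n + 1) (f n x)) = 0 :=
        DirectSum.of_eq_of_ne _ _ _ (by omega)
      have h2 : DirectSum.component R ℕ (fun n => Fin (k n) → R) i
          (DirectSum.lof R ℕ (fun n => Fin (k n) → R) n x) = 0 :=
        DirectSum.of_eq_of_ne _ _ _ (by omega)
      simp [h1, h2]
  rw [injective_iff_map_eq_zero]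
  intro x hx
  refine DFinsupp.ext fun n => ?_
  change DirectSum.component R ℕ (fun n => Fin (k n) → R) n x = 0
  induction n with
  | zero => simpa [hx] using (LinearMap.congr_fun h0 x).symm
  | succ n ih => simpa [hx, ih] using (LinearMap.congr_fun (hs n) x).symm

end System

theorem projective_iff_dual_tower_MittagLeffler
    (k : ℕ → ℕ) (f : ∀ n, (Fin (k n) → R) →ₗ[R] (Fin (k (n + 1)) → R))
    (B : Type u) [AddCommGroup B] [Module R B]
    (q : (⨁ n, (Fin (k n) → R)) →ₗ[R] B) (hq : Function.Surjective q)
    (hker : LinearMap.ker q = LinearMap.range (phiMap R k f)) :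
    Module.Projective R B ↔
      MittagLeffler (H := fun n => (Fin (k n) → R) →ₗ[R] R) (homMap f R) := by
  constructor
  · intro hB
    obtain ⟨s, hs⟩ := Module.projective_lifting_property q LinearMap.id hq
    have hmem : ∀ x, (LinearMap.id - s.comp q : (⨁ n, (Fin (k n) → R)) →ₗ[R] _) x ∈ LinearMap.range (phiMap R k f) := by
      intro x
      rw [← hker, LinearMap.mem_ker]
      have := LinearMap.congr_fun hs (q x)
      simp only [LinearMap.comp_apply, LinearMap.id_apply] at this
      simp [this]
    obtain ⟨t, ht⟩ := Module.projective_lifting_property (phiMap R k f).rangeRestrict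
      (LinearMap.codRestrict _ (LinearMap.id - s.comp q) hmem) (LinearMap.surjective_rangeRestrict _)
    have hφt : ∀ x, phiMap R k f (t x) = x - s (q x) := fun x =>
      congrArg Subtype.val (LinearMap.congr_fun ht x)
    have htφ : ∀ x, t (phiMap R k f x) = x := by
      intro x
      apply phiMap_injective f
      have : q (phiMap R k f x) = 0 := by
        rw [← LinearMap.mem_ker, hker]
        exact ⟨x, rfl⟩
      rw [hφt, this, map_zero, sub_zero]
    refine mittagLeffler_of_family f
      (fun n => t.comp (DirectSum.lof R ℕ (fun n => Fin (k n) → R) n)) fun n => ?_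
    refine LinearMap.ext fun x => ?_
    have h1 := htφ (DirectSum.lof R ℕ (fun n => Fin (k n) → R) n x)
    have h2 := LinearMap.congr_fun (phiMap_lof f n) x
    rw [LinearMap.comp_apply] at h2
    rw [h2, LinearMap.sub_apply, map_sub] at h1
    exact (sub_eq_iff_eq_add'.mp h1)
  · intro h
    obtain ⟨g, hg⟩ := exists_solution _
      (mittagLeffler_homMap f (⨁ n, (Fin (k n) → R)) h)
      (fun n => DirectSum.lof R ℕ (fun n => Fin (k n) → R) n)
    let ψ : (⨁ n, (Fin (k n) → R)) →ₗ[R] ⨁ n, (Fin (k n) → R) := DirectSum.toModule R ℕ _ g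
    have hψ : ψ.comp (phiMap R k f) = LinearMap.id := by
      refine DirectSum.linearMap_ext R fun n => ?_
      rw [LinearMap.comp_assoc, phiMap_lof]
      refine LinearMap.ext fun x => ?_
      have h1 : g n x = g (n + 1) (f n x) + DirectSum.lof R ℕ (fun n => Fin (k n) → R) n x :=
        LinearMap.congr_fun (hg n) x
      simp only [LinearMap.comp_apply, LinearMap.sub_apply, map_sub, ψ, DirectSum.toModule_lof,
        LinearMap.id_apply, h1]
      abel
    have hle : LinearMap.ker q ≤ LinearMap.ker (LinearMap.id - (phiMap R k f).comp ψ) := by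
      rw [hker]
      rintro _ ⟨x, rfl⟩
      have := LinearMap.congr_fun hψ x
      simp only [LinearMap.comp_apply, LinearMap.id_apply] at this
      simp [this]
    -- The idempotent `1 - φψ` kills `ker q`, so it descends to a section of `q`.
    let s : B →ₗ[R] ⨁ n, (Fin (k n) → R) := ((LinearMap.ker q).liftQ _ hle).comp
      (q.quotKerEquivOfSurjective hq).symm.toLinearMap
    have hs : ∀ x, s (q x) = x - phiMap R k f (ψ x) := by
      intro x
      have : (q.quotKerEquivOfSurjective hq).symm (q x) = (LinearMap.ker q).mkQ x := by
        rw [LinearEquiv.symm_apply_eq]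
        rfl
      simp only [s, LinearMap.comp_apply, LinearEquiv.coe_coe, this]
      rfl
    refine Module.Projective.of_split s q ?_
    refine LinearMap.ext fun b => ?_
    obtain ⟨x, rfl⟩ := hq b
    have : q (phiMap R k f (ψ x)) = 0 := by
      rw [← LinearMap.mem_ker, hker]
      exact ⟨_, rfl⟩
    simp [hs, this]
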